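/- Under the Entropy Setup, with ρ̄ > 0, let η*(ρ,m) = m²/(2ρ) + κρ^γ/(γ−1) be the physical entropy. Then there exists a constant M > 0 depending only on γ such that for all ρ > 0, m ∈ ℝ and all ξ ∈ ℝ², |ξ ∇²η̃(ρ,m) ξᵀ| ≤ M ξ ∇²η*(ρ,m) ξᵀ, where ∇² denotes the Hessian matrix in the variables (ρ,m). -/

import Mathlib

open MeasureTheory Real Set

noncomputable section

/-- The Lions–Perthame–Tadmor weak entropy
`η̌(ρ,m) = ∫_ℝ ½ s|s| [ρ^{2θ} − (m/ρ−s)²]_+^{(3−γ)/(2(γ−1))} ds`, with `2θ = γ−1`. -/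
def etaCheck (γ ρ m : ℝ) : ℝ :=
  ∫ s : ℝ, (1/2) * s * |s| *
    (max (ρ ^ (γ - 1) - (m / ρ - s) ^ (2:ℕ)) 0) ^ ((3 - γ) / (2 * (γ - 1)))

/-- The associated weak entropy flux
`q̌(ρ,m) = ∫_ℝ ½ s|s| (θs + (1−θ)m/ρ) [ρ^{2θ} − (m/ρ−s)²]_+^{(3−γ)/(2(γ−1))} ds`. -/
def qCheck (γ ρ m : ℝ) : ℝ :=
  ∫ s : ℝ, (1/2) * s * |s| * (((γ - 1)/2) * s + (1 - (γ - 1)/2) * (m / ρ)) *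
    (max (ρ ^ (γ - 1) - (m / ρ - s) ^ (2:ℕ)) 0) ^ ((3 - γ) / (2 * (γ - 1)))

/-- Partial derivative `η̌_ρ` in the variables `(ρ,m)`. -/
def etaCheckRho (γ ρ m : ℝ) : ℝ := deriv (fun x => etaCheck γ x m) ρ

/-- Partial derivative `η̌_m` in the variables `(ρ,m)`. -/
def etaCheckM (γ ρ m : ℝ) : ℝ := deriv (fun y => etaCheck γ ρ y) m

/-- The modified entropy `η̃(ρ,m) = η̌(ρ,m) − η̌_ρ(ρ̄,0)(ρ−ρ̄) − η̌_m(ρ̄,0)m`. -/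
def etaTilde (γ ρbar ρ m : ℝ) : ℝ :=
  etaCheck γ ρ m - etaCheckRho γ ρbar 0 * (ρ - ρbar) - etaCheckM γ ρbar 0 * m

/-- The modified entropy flux
`q̃(ρ,m) = q̌(ρ,m) − η̌_ρ(ρ̄,0)m − η̌_m(ρ̄,0)(m²/ρ + p(ρ))`, `p(ρ) = κρ^γ`. -/
def qTilde (γ κ ρbar ρ m : ℝ) : ℝ :=
  qCheck γ ρ m - etaCheckRho γ ρbar 0 * m
    - etaCheckM γ ρbar 0 * (m ^ (2:ℕ) / ρ + κ * ρ ^ γ)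

/-- `η̃_ρ` in the variables `(ρ,m)`. -/
def etaTildeRho (γ ρbar ρ m : ℝ) : ℝ := deriv (fun x => etaTilde γ ρbar x m) ρ

/-- `η̃_m` in the variables `(ρ,m)`. -/
def etaTildeM (γ ρbar ρ m : ℝ) : ℝ := deriv (fun y => etaTilde γ ρbar ρ y) m

/-- Partial derivative in the first variable of a function of `(ρ,m)`. -/
def pd1 (f : ℝ → ℝ → ℝ) (ρ m : ℝ) : ℝ := deriv (fun x => f x m) ρ

/-- Partial derivative in the second variable of a function of `(ρ,m)`. -/
def pd2 (f : ℝ → ℝ → ℝ) (ρ m : ℝ) : ℝ := deriv (fun y => f ρ y) m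

/-- The quadratic form `ξ ∇²f(ρ,m) ξᵀ` of the Hessian of `f` in the variables `(ρ,m)`,
evaluated at `ξ = (ξ₁,ξ₂)`. -/
def hessQF (f : ℝ → ℝ → ℝ) (ρ m ξ₁ ξ₂ : ℝ) : ℝ :=
  ξ₁ ^ (2:ℕ) * pd1 (pd1 f) ρ m + ξ₁ * ξ₂ * (pd1 (pd2 f) ρ m + pd2 (pd1 f) ρ m)
    + ξ₂ ^ (2:ℕ) * pd2 (pd2 f) ρ m

/-- The physical entropy `η*(ρ,m) = m²/(2ρ) + κρ^γ/(γ−1)`. -/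
def etaStar (γ κ ρ m : ℝ) : ℝ := m ^ (2:ℕ) / (2 * ρ) + κ * ρ ^ γ / (γ - 1)

/-! Both entropies have the form `ρ F(u, ρ^θ)` with `u = m/ρ`. In the directions `a = ξ₂ - u ξ₁` and
`b = θ ρ^θ ξ₁`, the chain rule turns the Hessian of such a function into `1/ρ` times the Hessian
of `F` at `(a, b)`, plus a term proportional to `ρ^θ ξ₁² ∂F/∂c`. The physical entropy
gives `(a² + δ b²)/ρ` with `δ > 0`. The weak entropy has `F(u, c) = ∫ ψ(u + c t) w(t) dt` with `ψ''`
bounded and `w` integrable of compact support, so the second derivatives of `F` are bounded;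
`w` being even makes `∂F/∂c = O(c)`, which absorbs the extra term into `b²`. -/

open Filter
open scoped Topology NNReal

section Calculus

/-- `F` is differentiable at `(u, c)`, jointly in its two arguments, with partial derivatives
`p` and `q`. -/
def HasPartialsAt (F : ℝ → ℝ → ℝ) (p q u c : ℝ) : Prop :=
  HasFDerivAt (fun z : ℝ × ℝ => F z.1 z.2)
    (p • ContinuousLinearMap.fst ℝ ℝ ℝ + q • ContinuousLinearMap.snd ℝ ℝ ℝ) (u, c)

namespace HasPartialsAt

variable {F G U V : ℝ → ℝ → ℝ} {p p' q q' U₁ U₂ V₁ V₂ x y : ℝ}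

theorem congr_partials (hF : HasPartialsAt F p q x y) (hp : p = p') (hq : q = q') :
    HasPartialsAt F p' q' x y :=
  hp ▸ hq ▸ hF

theorem congr_of_eventuallyEq (hF : HasPartialsAt F p q x y)
    (hGF : ∀ᶠ z in 𝓝 (x, y), G z.1 z.2 = F z.1 z.2) : HasPartialsAt G p q x y :=
  HasFDerivAt.congr_of_eventuallyEq hF hGF

theorem of_fst {g : ℝ → ℝ} (hg : HasDerivAt g p x) (y : ℝ) :
    HasPartialsAt (fun x _ => g x) p 0 x y :=
  (hg.comp_hasFDerivAt (x, y) hasFDerivAt_fst).congr_fderiv (by simp)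

theorem of_snd {g : ℝ → ℝ} (x : ℝ) (hg : HasDerivAt g q y) :
    HasPartialsAt (fun _ y => g y) 0 q x y :=
  (hg.comp_hasFDerivAt (x, y) hasFDerivAt_snd).congr_fderiv (by simp)

theorem comp (hF : HasPartialsAt F p q (U x y) (V x y)) (hU : HasPartialsAt U U₁ U₂ x y)
    (hV : HasPartialsAt V V₁ V₂ x y) :
    HasPartialsAt (fun x y => F (U x y) (V x y)) (p * U₁ + q * V₁) (p * U₂ + q * V₂) x y :=
  (HasFDerivAt.comp (x, y) (f := fun z : ℝ × ℝ => (U z.1 z.2, V z.1 z.2)) hF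
    (HasFDerivAt.prodMk hU hV)).congr_fderiv (by ext <;> simp)

theorem add (hF : HasPartialsAt F p q x y) (hG : HasPartialsAt G p' q' x y) :
    HasPartialsAt (fun x y => F x y + G x y) (p + p') (q + q') x y :=
  (HasFDerivAt.add hF hG).congr_fderiv (by ext <;> simp)

theorem sub (hF : HasPartialsAt F p q x y) (hG : HasPartialsAt G p' q' x y) :
    HasPartialsAt (fun x y => F x y - G x y) (p - p') (q - q') x y :=
  (HasFDerivAt.sub hF hG).congr_fderiv (by ext <;> simp)

theorem mul (hF : HasPartialsAt F p q x y) (hG : HasPartialsAt G p' q' x y) :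
    HasPartialsAt (fun x y => F x y * G x y) (p * G x y + F x y * p') (q * G x y + F x y * q')
      x y :=
  (HasFDerivAt.mul hF hG).congr_fderiv (by ext <;> simp <;> ring)

theorem pd1_eq (hF : HasPartialsAt F p q x y) : pd1 F x y = p := by
  have hline : HasDerivAt (fun x => (x, y)) (1, 0) x :=
    (hasDerivAt_id x).prodMk (hasDerivAt_const x y)
  exact (HasFDerivAt.comp_hasDerivAt (f := fun x => (x, y)) x hF hline).deriv.trans (by simp)

theorem pd2_eq (hF : HasPartialsAt F p q x y) : pd2 F x y = q := by
  have hline : HasDerivAt (fun y => (x, y)) (0, 1) y :=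
    (hasDerivAt_const y x).prodMk (hasDerivAt_id y)
  exact (HasFDerivAt.comp_hasDerivAt (f := fun y => (x, y)) y hF hline).deriv.trans (by simp)

end HasPartialsAt

/-- `F` is differentiable near `(u, c)` with gradient `(F₁, F₂)`, and twice differentiable at
`(u, c)` with Hessian matrix `[[A, B], [B, C]]`. -/
structure HasHessianAt (F F₁ F₂ : ℝ → ℝ → ℝ) (A B C u c : ℝ) : Prop where
  gradient : ∀ᶠ z in 𝓝 (u, c), HasPartialsAt F (F₁ z.1 z.2) (F₂ z.1 z.2) z.1 z.2
  partials_fst : HasPartialsAt F₁ A B u c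
  partials_snd : HasPartialsAt F₂ B C u c

namespace HasHessianAt

variable {F F₁ F₂ G : ℝ → ℝ → ℝ} {A B C x y : ℝ}

theorem hessQF_eq (hF : HasHessianAt F F₁ F₂ A B C x y) (ξ₁ ξ₂ : ℝ) :
    hessQF F x y ξ₁ ξ₂ = ξ₁ ^ 2 * A + 2 * (ξ₁ * ξ₂) * B + ξ₂ ^ 2 * C := by
  have hfst : HasPartialsAt (pd1 F) A B x y :=
    hF.partials_fst.congr_of_eventuallyEq (hF.gradient.mono fun _ hz => hz.pd1_eq)
  have hsnd : HasPartialsAt (pd2 F) B C x y :=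
    hF.partials_snd.congr_of_eventuallyEq (hF.gradient.mono fun _ hz => hz.pd2_eq)
  rw [hessQF, hfst.pd1_eq, hsnd.pd1_eq, hfst.pd2_eq, hsnd.pd2_eq]
  ring

theorem congr_of_eventuallyEq (hF : HasHessianAt F F₁ F₂ A B C x y)
    (hGF : ∀ᶠ z in 𝓝 (x, y), G z.1 z.2 = F z.1 z.2) : HasHessianAt G F₁ F₂ A B C x y where
  gradient := by
    filter_upwards [hF.gradient, hGF.eventually_nhds] with z hz hGFz
    exact hz.congr_of_eventuallyEq hGFz
  partials_fst := hF.partials_fst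
  partials_snd := hF.partials_snd

theorem hessQF_congr (hF : HasHessianAt F F₁ F₂ A B C x y)
    (hGF : ∀ᶠ z in 𝓝 (x, y), G z.1 z.2 = F z.1 z.2) (ξ₁ ξ₂ : ℝ) :
    hessQF G x y ξ₁ ξ₂ = hessQF F x y ξ₁ ξ₂ :=
  ((hF.congr_of_eventuallyEq hGF).hessQF_eq ξ₁ ξ₂).trans (hF.hessQF_eq ξ₁ ξ₂).symm

theorem sub_affine (hF : HasHessianAt F F₁ F₂ A B C x y) (a r b : ℝ) :
    HasHessianAt (fun x y => F x y - a * (x - r) - b * y) (fun x y => F₁ x y - a)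
      (fun x y => F₂ x y - b) A B C x y where
  gradient := hF.gradient.mono fun z hz =>
    ((hz.sub (.of_fst (((hasDerivAt_id z.1).sub_const r).const_mul a) z.2)).sub
      (.of_snd z.1 ((hasDerivAt_id z.2).const_mul b))).congr_partials (by simp) (by simp)
  partials_fst := (hF.partials_fst.sub (.of_fst (hasDerivAt_const x a) y)).congr_partials
    (sub_zero A) (sub_zero B)
  partials_snd := (hF.partials_snd.sub (.of_fst (hasDerivAt_const x b) y)).congr_partials
    (sub_zero B) (sub_zero C)

end HasHessianAt

end Calculus

section SpecificEntropy

/-- The density `ρ F(u, ρ^θ)`, `u = m/ρ`, of a quantity whose amount per unit mass is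
`F(u, ρ^θ)`. Both the physical entropy and the weak entropies are of this form. -/
def densityOf (θ : ℝ) (F : ℝ → ℝ → ℝ) (ρ m : ℝ) : ℝ := ρ * F (m / ρ) (ρ ^ θ)

variable {F F₁ F₂ : ℝ → ℝ → ℝ} {A B C p q θ ρ : ℝ}

theorem eventually_fst_pos (hρ : 0 < ρ) (m : ℝ) : ∀ᶠ z : ℝ × ℝ in 𝓝 (ρ, m), 0 < z.1 :=
  continuousAt_fst.eventually_const_lt hρ

theorem hasPartialsAt_velocity (hρ : ρ ≠ 0) (m : ℝ) :
    HasPartialsAt (fun ρ m => m / ρ) (-(m / ρ) / ρ) (1 / ρ) ρ m := by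
  refine ((HasPartialsAt.of_snd ρ (hasDerivAt_id m)).mul
    (.of_fst (hasDerivAt_inv hρ) m)).congr_partials ?_ ?_
  · simp only [id]
    field_simp
    ring
  · simp

theorem hasPartialsAt_rpow (hρ : 0 < ρ) (θ m : ℝ) :
    HasPartialsAt (fun ρ _ => ρ ^ θ) (θ * ρ ^ θ / ρ) 0 ρ m :=
  .of_fst ((Real.hasDerivAt_rpow_const (Or.inl hρ.ne')).congr_deriv
    (by rw [Real.rpow_sub_one hρ.ne', mul_div_assoc])) m

theorem HasPartialsAt.comp_velocity_rpow {m : ℝ} (hF : HasPartialsAt F p q (m / ρ) (ρ ^ θ))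
    (hρ : 0 < ρ) :
    HasPartialsAt (fun ρ m => F (m / ρ) (ρ ^ θ)) ((-(m / ρ) * p + θ * ρ ^ θ * q) / ρ) (p / ρ)
      ρ m :=
  (hF.comp (hasPartialsAt_velocity hρ.ne' m) (hasPartialsAt_rpow hρ θ m)).congr_partials
    (by ring) (by ring)

theorem hasPartialsAt_densityOf {m : ℝ} (hF : HasPartialsAt F p q (m / ρ) (ρ ^ θ)) (hρ : 0 < ρ) :
    HasPartialsAt (densityOf θ F) (F (m / ρ) (ρ ^ θ) - m / ρ * p + θ * ρ ^ θ * q) p ρ m := by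
  refine ((HasPartialsAt.of_fst (hasDerivAt_id ρ) m).mul
    (hF.comp_velocity_rpow hρ)).congr_partials ?_ ?_
  · simp only [id]
    field_simp
    ring
  · simp only [id]
    field_simp
    ring

theorem hasHessianAt_densityOf {m : ℝ} (hF : HasHessianAt F F₁ F₂ A B C (m / ρ) (ρ ^ θ))
    (hρ : 0 < ρ) :
    HasHessianAt (densityOf θ F)
      (fun ρ m => F (m / ρ) (ρ ^ θ) - m / ρ * F₁ (m / ρ) (ρ ^ θ) + θ * ρ ^ θ * F₂ (m / ρ) (ρ ^ θ))
      (fun ρ m => F₁ (m / ρ) (ρ ^ θ))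
      (((m / ρ) ^ 2 * A - 2 * (m / ρ) * (θ * ρ ^ θ) * B + (θ * ρ ^ θ) ^ 2 * C
        + θ * (1 + θ) * ρ ^ θ * F₂ (m / ρ) (ρ ^ θ)) / ρ)
      ((-(m / ρ) * A + θ * ρ ^ θ * B) / ρ) (A / ρ) ρ m where
  gradient := by
    have hvelocity := hasPartialsAt_velocity hρ.ne' m
    have hrpow := hasPartialsAt_rpow hρ θ m
    have hcont : ContinuousAt (fun z : ℝ × ℝ => (z.2 / z.1, z.1 ^ θ)) (ρ, m) :=
      (HasFDerivAt.continuousAt hvelocity).prodMk (HasFDerivAt.continuousAt hrpow)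
    filter_upwards [hcont.eventually hF.gradient, eventually_fst_pos hρ m]
      with z hz hpos
    exact hasPartialsAt_densityOf hz hpos
  partials_fst := by
    have hvelocity := hasPartialsAt_velocity hρ.ne' m
    have hrpow := hasPartialsAt_rpow hρ θ m
    refine ((hF.gradient.self_of_nhds.comp_velocity_rpow hρ).sub
      (hvelocity.mul (hF.partials_fst.comp_velocity_rpow hρ)) |>.add
      (((HasPartialsAt.of_fst (hasDerivAt_const ρ θ) m).mul hrpow).mul
        (hF.partials_snd.comp_velocity_rpow hρ))).congr_partials ?_ ?_ <;> ring
  partials_snd := hF.partials_fst.comp_velocity_rpow hρ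

theorem hessQF_densityOf {m : ℝ} (hF : HasHessianAt F F₁ F₂ A B C (m / ρ) (ρ ^ θ))
    (hρ : 0 < ρ) (ξ₁ ξ₂ : ℝ) :
    hessQF (densityOf θ F) ρ m ξ₁ ξ₂ =
      ((ξ₂ - m / ρ * ξ₁) ^ 2 * A + 2 * ((ξ₂ - m / ρ * ξ₁) * (θ * ρ ^ θ * ξ₁)) * B
        + (θ * ρ ^ θ * ξ₁) ^ 2 * C + θ * (1 + θ) * ρ ^ θ * ξ₁ ^ 2 * F₂ (m / ρ) (ρ ^ θ)) / ρ := by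
  rw [(hasHessianAt_densityOf hF hρ).hessQF_eq]
  ring

end SpecificEntropy

section KernelAverage

/-- The average `∫ φ(u + c t) h(t) dt` of `φ` against the kernel `h` moved to `u` and dilated
by `c`. -/
def kernelAverage (h φ : ℝ → ℝ) (u c : ℝ) : ℝ := ∫ t, φ (u + c * t) * h t

theorem ae_differentiableAt_of_locallyLipschitz {φ : ℝ → ℝ} (hφ : LocallyLipschitz φ) :
    ∀ᵐ s, DifferentiableAt ℝ φ s := by
  have hball : ∀ n : ℕ, ∀ᵐ s, s ∈ Metric.ball (0 : ℝ) n → DifferentiableAt ℝ φ s := fun n => by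
    obtain ⟨C, hC⟩ := (hφ.locallyLipschitzOn (s := Metric.closedBall (0 : ℝ) n))
      |>.exists_lipschitzOnWith_of_compact (isCompact_closedBall _ _)
    filter_upwards [(hC.mono Metric.ball_subset_closedBall).ae_differentiableWithinAt_of_mem]
      with s hs hmem
    exact (hs hmem).differentiableAt (Metric.isOpen_ball.mem_nhds hmem)
  filter_upwards [ae_all_iff.2 hball] with s hs
  obtain ⟨n, hn⟩ := exists_nat_gt |s|
  exact hs n (by simpa using hn)

theorem quasiMeasurePreserving_add_mul (u : ℝ) {c : ℝ} (hc : c ≠ 0) :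
    Measure.QuasiMeasurePreserving (fun t : ℝ => u + c * t) := by
  have hmul : Measure.QuasiMeasurePreserving (fun t : ℝ => c * t) :=
    ⟨measurable_const_mul c, by
      rw [Real.map_volume_mul_left hc]
      exact Measure.smul_absolutelyContinuous⟩
  exact (measurePreserving_add_left volume u).quasiMeasurePreserving.comp hmul

section

variable {h φ : ℝ → ℝ}

theorem integrable_mul_of_continuous (hh : Integrable h) (hsupp : HasCompactSupport h)
    (hφ : Continuous φ) : Integrable (fun t => φ t * h t) := by
  have hsub : Function.support (fun t => φ t * h t) ⊆ tsupport h :=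
    (Function.support_mul_subset_right _ _).trans (subset_tsupport h)
  rw [← integrableOn_iff_integrable_of_support_subset hsub]
  exact hh.integrableOn.continuousOn_mul hφ.continuousOn hsupp

theorem lipschitzWith_add_mul (t : ℝ) :
    LipschitzWith (1 + ‖t‖₊) (fun z : ℝ × ℝ => z.1 + z.2 * t) := by
  have hdil : LipschitzWith ‖t‖₊ (fun z : ℝ × ℝ => z.2 * t) := by
    refine LipschitzWith.of_dist_le_mul fun z z' => ?_
    rw [Real.dist_eq, ← sub_mul, abs_mul, mul_comm, coe_nnnorm, Real.norm_eq_abs]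
    exact mul_le_mul_of_nonneg_left (le_max_right _ _) (abs_nonneg t)
  exact LipschitzWith.prod_fst.add hdil

theorem exists_lipschitzOnWith_integrand (hφ : LocallyLipschitz φ) (hsupp : HasCompactSupport h)
    (z₀ : ℝ × ℝ) :
    ∃ C : ℝ≥0, ∀ t, LipschitzOnWith (Real.nnabs (C * (1 + |t|) * |h t|))
      (fun z : ℝ × ℝ => φ (z.1 + z.2 * t) * h t) (Metric.closedBall z₀ 1) := by
  let arg : (ℝ × ℝ) × ℝ → ℝ := fun p => p.1.1 + p.1.2 * p.2
  have hcompact : IsCompact (arg '' Metric.closedBall z₀ 1 ×ˢ tsupport h) :=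
    ((isCompact_closedBall z₀ 1).prod hsupp).image (by fun_prop)
  obtain ⟨C, hC⟩ := hφ.locallyLipschitzOn.exists_lipschitzOnWith_of_compact hcompact
  refine ⟨C, fun t => LipschitzOnWith.of_dist_le_mul fun z hz z' hz' => ?_⟩
  by_cases ht : t ∈ tsupport h
  · have hmem : ∀ v ∈ Metric.closedBall z₀ 1, v.1 + v.2 * t ∈
        arg '' Metric.closedBall z₀ 1 ×ˢ tsupport h := fun v hv => ⟨(v, t), ⟨hv, ht⟩, rfl⟩
    calc dist (φ (z.1 + z.2 * t) * h t) (φ (z'.1 + z'.2 * t) * h t)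
        = dist (φ (z.1 + z.2 * t)) (φ (z'.1 + z'.2 * t)) * |h t| := by
          rw [Real.dist_eq, ← sub_mul, abs_mul, Real.dist_eq]
      _ ≤ C * ((1 + ‖t‖₊ : ℝ≥0) * dist z z') * |h t| := by
          gcongr
          exact (hC.dist_le_mul _ (hmem z hz) _ (hmem z' hz')).trans
            (mul_le_mul_of_nonneg_left ((lipschitzWith_add_mul t).dist_le_mul z z') C.coe_nonneg)
      _ = Real.nnabs (C * (1 + |t|) * |h t|) * dist z z' := by
          rw [Real.coe_nnabs, abs_mul, abs_abs,
            abs_of_nonneg (by positivity : 0 ≤ C * (1 + |t|)), NNReal.coe_add, NNReal.coe_one,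
            coe_nnnorm, Real.norm_eq_abs]
          ring
  · simp [image_eq_zero_of_notMem_tsupport ht]

theorem hasPartialsAt_kernelAverage (hφ : LocallyLipschitz φ) (hh : Integrable h)
    (hsupp : HasCompactSupport h) (u : ℝ) {c : ℝ} (hc : c ≠ 0) :
    HasPartialsAt (kernelAverage h φ) (kernelAverage h (deriv φ) u c)
      (kernelAverage (fun t => t * h t) (deriv φ) u c) u c := by
  obtain ⟨C, hC⟩ := exists_lipschitzOnWith_integrand hφ hsupp (u, c)
  let grad : ℝ → (ℝ × ℝ →L[ℝ] ℝ) := fun t =>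
    (deriv φ (u + c * t) * h t) •
      (ContinuousLinearMap.fst ℝ ℝ ℝ + t • ContinuousLinearMap.snd ℝ ℝ ℝ)
  have hint : ∀ z : ℝ × ℝ, Integrable fun t => φ (z.1 + z.2 * t) * h t := fun z =>
    integrable_mul_of_continuous hh hsupp (hφ.continuous.comp (by fun_prop))
  have hgrad_meas : AEStronglyMeasurable grad :=
    (((measurable_deriv φ).comp (by fun_prop)).aestronglyMeasurable.mul
      hh.aestronglyMeasurable).smul (by fun_prop)
  have hbound : Integrable fun t => C * (1 + |t|) * |h t| := by
    refine integrable_mul_of_continuous hh.abs ?_ (by fun_prop)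
    exact hsupp.norm
  have hdiff : ∀ᵐ t, HasFDerivAt (fun z : ℝ × ℝ => φ (z.1 + z.2 * t) * h t) (grad t) (u, c) := by
    filter_upwards [(quasiMeasurePreserving_add_mul u hc).ae
      (ae_differentiableAt_of_locallyLipschitz hφ)] with t ht
    have harg : HasFDerivAt (fun z : ℝ × ℝ => z.1 + z.2 * t)
        (ContinuousLinearMap.fst ℝ ℝ ℝ + t • ContinuousLinearMap.snd ℝ ℝ ℝ) (u, c) :=
      hasFDerivAt_fst.add (hasFDerivAt_snd.mul_const t)
    exact ((ht.hasDerivAt.comp_hasFDerivAt (u, c) harg).mul_const (h t)).congr_fderiv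
      (by rw [smul_smul, mul_comm])
  have hintegral := hasFDerivAt_integral_of_dominated_loc_of_lip
    (Metric.closedBall_mem_nhds (u, c) one_pos)
    (Eventually.of_forall fun z => (hint z).aestronglyMeasurable) (hint (u, c)) hgrad_meas
    (Eventually.of_forall hC) hbound hdiff
  refine hintegral.2.congr_fderiv ?_
  ext
  · refine (ContinuousLinearMap.integral_apply hintegral.1 (1, 0)).trans ?_
    simp [grad, kernelAverage]
  · refine (ContinuousLinearMap.integral_apply hintegral.1 (0, 1)).trans ?_
    simp [grad, kernelAverage, mul_comm, mul_left_comm]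

theorem abs_kernelAverage_le {g : ℝ → ℝ} {K : ℝ} (hφ : ∀ s, |φ s| ≤ K) (hg : Integrable g)
    (hle : ∀ t, |h t| ≤ g t) (u c : ℝ) : |kernelAverage h φ u c| ≤ K * ∫ t, g t := by
  rw [← integral_const_mul, ← Real.norm_eq_abs]
  refine norm_integral_le_of_norm_le (hg.const_mul K) (Eventually.of_forall fun t => ?_)
  rw [norm_mul]
  exact mul_le_mul (hφ _) (hle t) (abs_nonneg _) ((abs_nonneg _).trans (hφ 0))

theorem abs_kernelAverage_le_of_integral_eq_zero {K : ℝ≥0} (hφ : LipschitzWith K φ)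
    (hh : Integrable h) (hsupp : HasCompactSupport h) (hzero : ∫ t, h t = 0) (u c : ℝ) :
    |kernelAverage h φ u c| ≤ K * |c| * ∫ t, |t * h t| := by
  have hincrement : kernelAverage h φ u c = ∫ t, (φ (u + c * t) - φ u) * h t := by
    have hint : Integrable fun t => φ (u + c * t) * h t :=
      integrable_mul_of_continuous hh hsupp (hφ.continuous.comp (by fun_prop))
    simp_rw [sub_mul]
    rw [integral_sub hint (hh.const_mul _), integral_const_mul, hzero, mul_zero, sub_zero,
      kernelAverage]
  rw [hincrement, ← integral_const_mul, ← Real.norm_eq_abs]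
  refine norm_integral_le_of_norm_le
    ((integrable_mul_of_continuous hh hsupp continuous_id).abs.const_mul _)
    (Eventually.of_forall fun t => ?_)
  calc ‖(φ (u + c * t) - φ u) * h t‖ ≤ K * ‖u + c * t - u‖ * ‖h t‖ := by
        rw [norm_mul]
        gcongr
        exact hφ.norm_sub_le _ _
    _ = K * |c| * |t * h t| := by
        rw [add_sub_cancel_left, norm_mul, abs_mul, Real.norm_eq_abs, Real.norm_eq_abs,
          Real.norm_eq_abs]
        ring

end

theorem integral_eq_zero_of_odd {h : ℝ → ℝ} (hodd : Function.Odd h) : ∫ t, h t = 0 := by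
  have hneg := integral_neg_eq_self h volume
  simp only [hodd _, integral_neg] at hneg
  linarith

end KernelAverage

section WeakEntropy

theorem abs_quadraticForm_le {N A B C : ℝ} (hA : |A| ≤ N) (hB : |B| ≤ N) (hC : |C| ≤ N)
    (a b : ℝ) : |a ^ 2 * A + 2 * (a * b) * B + b ^ 2 * C| ≤ 2 * N * (a ^ 2 + b ^ 2) := by
  have hN : 0 ≤ N := (abs_nonneg A).trans hA
  calc |a ^ 2 * A + 2 * (a * b) * B + b ^ 2 * C|
      ≤ |a| ^ 2 * |A| + 2 * (|a| * |b|) * |B| + |b| ^ 2 * |C| := by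
        refine (abs_add_three _ _ _).trans_eq ?_
        simp only [abs_mul, abs_pow, abs_two]
    _ ≤ |a| ^ 2 * N + 2 * (|a| * |b|) * N + |b| ^ 2 * N := by gcongr
    _ = (|a| + |b|) ^ 2 * N := by ring
    _ ≤ 2 * (|a| ^ 2 + |b| ^ 2) * N := by
        gcongr
        exact add_sq_le
    _ = 2 * N * (a ^ 2 + b ^ 2) := by
        rw [sq_abs, sq_abs]
        ring

theorem abs_le_one_add_sq_mul_abs (t x : ℝ) : |x| ≤ (1 + t ^ 2) * |x| :=
  le_mul_of_one_le_left (abs_nonneg x) (le_add_of_nonneg_right (sq_nonneg t))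

theorem abs_mul_le_one_add_sq_mul_abs (t x : ℝ) : |t * x| ≤ (1 + t ^ 2) * |x| := by
  rw [abs_mul]
  gcongr
  nlinarith [sq_nonneg (|t| - 1), sq_abs t, sq_nonneg t]

theorem abs_mul_mul_le_one_add_sq_mul_abs (t x : ℝ) : |t * (t * x)| ≤ (1 + t ^ 2) * |x| := by
  rw [← mul_assoc, ← pow_two, abs_mul, abs_of_nonneg (sq_nonneg t)]
  gcongr
  linarith

/-- The kernels against which weak entropies are averaged: integrable, compactly supported and
even. -/
structure IsEntropyKernel (w : ℝ → ℝ) : Prop where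
  integrable : Integrable w
  hasCompactSupport : HasCompactSupport w
  even : Function.Even w

namespace IsEntropyKernel

variable {w ψ : ℝ → ℝ}

theorem integrable_mul (hw : IsEntropyKernel w) {φ : ℝ → ℝ} (hφ : Continuous φ) :
    Integrable (fun t => φ t * w t) :=
  integrable_mul_of_continuous hw.integrable hw.hasCompactSupport hφ

theorem hasHessianAt_kernelAverage (hw : IsEntropyKernel w) (hψ : LocallyLipschitz ψ)
    (hψ' : LocallyLipschitz (deriv ψ)) (u : ℝ) {c : ℝ} (hc : c ≠ 0) :
    HasHessianAt (kernelAverage w ψ) (kernelAverage w (deriv ψ))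
      (kernelAverage (fun t => t * w t) (deriv ψ))
      (kernelAverage w (deriv (deriv ψ)) u c)
      (kernelAverage (fun t => t * w t) (deriv (deriv ψ)) u c)
      (kernelAverage (fun t => t * (t * w t)) (deriv (deriv ψ)) u c) u c where
  gradient := (continuousAt_snd.eventually_ne hc).mono fun z hz =>
    hasPartialsAt_kernelAverage hψ hw.integrable hw.hasCompactSupport z.1 hz
  partials_fst := hasPartialsAt_kernelAverage hψ' hw.integrable hw.hasCompactSupport u hc
  partials_snd := hasPartialsAt_kernelAverage hψ' (hw.integrable_mul continuous_id)
    hw.hasCompactSupport.mul_left u hc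

theorem integrable_one_add_sq_mul_abs (hw : IsEntropyKernel w) :
    Integrable fun t => (1 + t ^ 2) * |w t| :=
  integrable_mul_of_continuous hw.integrable.abs hw.hasCompactSupport.norm (by fun_prop)

theorem abs_kernelAverage_mul_le (hw : IsEntropyKernel w) {K : ℝ≥0} {φ : ℝ → ℝ}
    (hφ : LipschitzWith K φ) (u c : ℝ) :
    |kernelAverage (fun t => t * w t) φ u c| ≤ K * |c| * ∫ t, (1 + t ^ 2) * |w t| := by
  have hodd : Function.Odd fun t => t * w t := fun t => by simp only [hw.even t, neg_mul]
  have hint : Integrable fun t => t * w t := hw.integrable_mul continuous_id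
  refine (abs_kernelAverage_le_of_integral_eq_zero hφ hint hw.hasCompactSupport.mul_left
    (integral_eq_zero_of_odd hodd) u c).trans ?_
  gcongr
  · exact (integrable_mul_of_continuous hint hw.hasCompactSupport.mul_left continuous_id).abs
  · exact hw.integrable_one_add_sq_mul_abs
  · exact fun t => abs_mul_mul_le_one_add_sq_mul_abs t (w t)

theorem abs_hessQF_densityOf_kernelAverage_le (hw : IsEntropyKernel w) {K : ℝ≥0}
    (hψ : LocallyLipschitz ψ) (hψ' : LipschitzWith K (deriv ψ)) {θ ρ : ℝ} (hθ : 0 < θ)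
    (hρ : 0 < ρ) (m ξ₁ ξ₂ : ℝ) :
    |hessQF (densityOf θ (kernelAverage w ψ)) ρ m ξ₁ ξ₂| ≤
      K * (∫ t, (1 + t ^ 2) * |w t|) * (3 + 1 / θ) *
        (((ξ₂ - m / ρ * ξ₁) ^ 2 + (θ * ρ ^ θ * ξ₁) ^ 2) / ρ) := by
  have hc : 0 < ρ ^ θ := Real.rpow_pos_of_pos hρ θ
  have hψ'' : ∀ s, |deriv (deriv ψ) s| ≤ K := fun s => norm_deriv_le_of_lipschitz hψ'
  have hmoment : ∀ g : ℝ → ℝ, (∀ t, |g t| ≤ (1 + t ^ 2) * |w t|) →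
      |kernelAverage g (deriv (deriv ψ)) (m / ρ) (ρ ^ θ)| ≤ K * ∫ t, (1 + t ^ 2) * |w t| :=
    fun g hg => abs_kernelAverage_le hψ'' hw.integrable_one_add_sq_mul_abs hg _ _
  rw [hessQF_densityOf (hw.hasHessianAt_kernelAverage hψ hψ'.locallyLipschitz _ hc.ne') hρ,
    abs_div, abs_of_pos hρ, ← mul_div_assoc]
  have hquad := abs_quadraticForm_le (hmoment _ fun t => abs_le_one_add_sq_mul_abs t _)
    (hmoment _ fun t => abs_mul_le_one_add_sq_mul_abs t _)
    (hmoment _ fun t => abs_mul_mul_le_one_add_sq_mul_abs t _)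
    (ξ₂ - m / ρ * ξ₁) (θ * ρ ^ θ * ξ₁)
  have hdrift : |θ * (1 + θ) * ρ ^ θ * ξ₁ ^ 2 *
      kernelAverage (fun t => t * w t) (deriv ψ) (m / ρ) (ρ ^ θ)| ≤
        K * (∫ t, (1 + t ^ 2) * |w t|) * (1 + 1 / θ) * (θ * ρ ^ θ * ξ₁) ^ 2 := by
    have hbound := hw.abs_kernelAverage_mul_le hψ' (m / ρ) (ρ ^ θ)
    rw [abs_of_pos hc] at hbound
    rw [abs_mul, abs_of_nonneg (by positivity : 0 ≤ θ * (1 + θ) * ρ ^ θ * ξ₁ ^ 2)]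
    refine (mul_le_mul_of_nonneg_left hbound (by positivity)).trans_eq ?_
    field_simp
    ring
  gcongr
  refine (abs_add_le _ _).trans ((add_le_add hquad hdrift).trans ?_)
  have hmass : 0 ≤ K * (∫ t, (1 + t ^ 2) * |w t|) * (1 + 1 / θ) * (ξ₂ - m / ρ * ξ₁) ^ 2 :=
    by positivity
  linarith

end IsEntropyKernel

end WeakEntropy

section LionsPerthameTadmor

/-- The generating function `½ s|s|` of the Lions–Perthame–Tadmor entropy. -/
def lptGenerator (s : ℝ) : ℝ := (1 / 2) * s * |s|

theorem hasDerivAt_lptGenerator (s : ℝ) : HasDerivAt lptGenerator |s| s := by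
  have hcont : Continuous lptGenerator := by unfold lptGenerator; fun_prop
  refine hasDerivAt_of_hasDerivAt_of_ne' (x := 0) (fun y hy => ?_) hcont.continuousAt
    continuous_abs.continuousAt s
  have hmul := ((hasDerivAt_id y).const_mul (1 / 2)).mul (hasDerivAt_abs hy)
  refine hmul.congr_deriv ?_
  rcases lt_or_gt_of_ne hy with hneg | hpos
  · rw [sign_neg hneg, abs_of_neg hneg, SignType.coe_neg_one, id]
    ring
  · rw [sign_pos hpos, abs_of_pos hpos, SignType.coe_one, id]
    ring

theorem deriv_lptGenerator : deriv lptGenerator = abs :=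
  funext fun s => (hasDerivAt_lptGenerator s).deriv

theorem lipschitzWith_deriv_lptGenerator : LipschitzWith 1 (deriv lptGenerator) := by
  rw [deriv_lptGenerator]
  exact lipschitzWith_one_norm

theorem locallyLipschitz_lptGenerator : LocallyLipschitz lptGenerator :=
  (contDiff_one_iff_deriv.2 ⟨fun s => (hasDerivAt_lptGenerator s).differentiableAt,
    lipschitzWith_deriv_lptGenerator.continuous⟩).locallyLipschitz

theorem integral_lptGenerator : ∫ s, lptGenerator s = 0 :=
  integral_eq_zero_of_odd fun s => by rw [lptGenerator, lptGenerator, abs_neg]; ring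

/-- The normalised kernel `(1 - t²)₊^p`. -/
def lptKernel (p t : ℝ) : ℝ := max (1 - t ^ 2) 0 ^ p

theorem lptKernel_of_one_le_abs {p t : ℝ} (hp : p ≠ 0) (ht : 1 ≤ |t|) : lptKernel p t = 0 := by
  have hsq : 1 - t ^ 2 ≤ 0 := sub_nonpos.2 ((one_le_sq_iff_one_le_abs t).2 ht)
  rw [lptKernel, max_eq_right hsq, Real.zero_rpow hp]

theorem integrable_betaPDFReal {α β : ℝ} (hα : 0 < α) (hβ : 0 < β) :
    Integrable (ProbabilityTheory.betaPDFReal α β) := by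
  refine ⟨(ProbabilityTheory.stronglyMeasurable_betaPDFReal α β).aestronglyMeasurable, ?_⟩
  have hnonneg : ∀ x, 0 ≤ ProbabilityTheory.betaPDFReal α β x := fun x => by
    by_cases hx : 0 < x ∧ x < 1
    · exact (ProbabilityTheory.betaPDFReal_pos hx.1 hx.2 hα hβ).le
    · rw [ProbabilityTheory.betaPDFReal, if_neg hx]
  rw [hasFiniteIntegral_iff_ofReal (Eventually.of_forall hnonneg)]
  exact (ProbabilityTheory.lintegral_betaPDF_eq_one hα hβ).trans_lt ENNReal.one_lt_top

theorem lptKernel_two_mul_sub_one {p : ℝ} (hp : -1 < p) (hp₀ : p ≠ 0) (x : ℝ) :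
    lptKernel p (2 * x - 1) = 4 ^ p * ProbabilityTheory.beta (p + 1) (p + 1) *
      ProbabilityTheory.betaPDFReal (p + 1) (p + 1) x := by
  have hbeta : ProbabilityTheory.beta (p + 1) (p + 1) ≠ 0 :=
    (ProbabilityTheory.beta_pos (by linarith) (by linarith)).ne'
  by_cases hx : 0 < x ∧ x < 1
  · obtain ⟨hpos, hlt⟩ := hx
    have hfactor : 1 - (2 * x - 1) ^ 2 = 4 * (x * (1 - x)) := by ring
    have hsub : 0 < 1 - x := sub_pos.2 hlt
    rw [lptKernel, hfactor, max_eq_left (by positivity),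
      Real.mul_rpow (by norm_num) (by positivity), Real.mul_rpow hpos.le hsub.le,
      ProbabilityTheory.betaPDFReal, if_pos ⟨hpos, hlt⟩,
      add_sub_cancel_right]
    field_simp
  · have habs : 1 ≤ |2 * x - 1| := by
      rw [le_abs']
      by_contra! hlt
      exact hx ⟨by linarith, by linarith⟩
    rw [lptKernel_of_one_le_abs hp₀ habs, ProbabilityTheory.betaPDFReal, if_neg hx, mul_zero]

theorem integrable_lptKernel {p : ℝ} (hp : -1 < p) (hp₀ : p ≠ 0) : Integrable (lptKernel p) := by
  have haffine : Integrable fun x => lptKernel p (2 * x - 1) := by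
    simp_rw [lptKernel_two_mul_sub_one hp hp₀]
    exact (integrable_betaPDFReal (by linarith) (by linarith)).const_mul _
  have hshift : Integrable fun x => lptKernel p (x - 1) :=
    (integrable_comp_mul_left_iff (fun x => lptKernel p (x - 1)) two_ne_zero).1 haffine
  simpa using hshift.comp_add_right 1

theorem isEntropyKernel_lptKernel {p : ℝ} (hp : -1 < p) (hp₀ : p ≠ 0) :
    IsEntropyKernel (lptKernel p) where
  integrable := integrable_lptKernel hp hp₀
  hasCompactSupport := HasCompactSupport.intro (isCompact_Icc (a := -1) (b := 1)) fun t ht =>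
    lptKernel_of_one_le_abs hp₀ (le_of_not_ge fun hle => ht (abs_le.1 hle))
  even t := by rw [lptKernel, neg_sq, lptKernel]

theorem isEntropyKernel_zero : IsEntropyKernel 0 :=
  ⟨integrable_zero _ _ _, HasCompactSupport.zero, fun _ => rfl⟩

theorem sq_rpow_half {ρ : ℝ} (hρ : 0 ≤ ρ) (a : ℝ) : (ρ ^ (a / 2)) ^ 2 = ρ ^ a := by
  rw [← Real.rpow_mul_natCast hρ, Nat.cast_two, div_mul_cancel₀ a two_ne_zero]

theorem max_sq_sub_sq_rpow (c p t : ℝ) :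
    max (c ^ 2 - (c * t) ^ 2) 0 ^ p = (c ^ 2) ^ p * lptKernel p t := by
  have hfactor : max (c ^ 2 - (c * t) ^ 2) 0 = c ^ 2 * max (1 - t ^ 2) 0 := by
    rw [mul_max_of_nonneg _ _ (sq_nonneg c), mul_zero, mul_sub, mul_one, mul_pow]
  rw [hfactor, Real.mul_rpow (sq_nonneg c) (le_max_right _ _), lptKernel]

theorem integral_mul_max_sq_sub_sq_rpow (ψ : ℝ → ℝ) (p u : ℝ) {c : ℝ} (hc : 0 < c) :
    ∫ s, ψ s * max (c ^ 2 - (u - s) ^ 2) 0 ^ p =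
      c * (c ^ 2) ^ p * kernelAverage (lptKernel p) ψ u c := by
  let f : ℝ → ℝ := fun s => ψ s * max (c ^ 2 - (u - s) ^ 2) 0 ^ p
  have hf : ∀ t, f (u + c * t) = (c ^ 2) ^ p * (ψ (u + c * t) * lptKernel p t) := fun t => by
    simp only [f]
    rw [sub_add_cancel_left, neg_sq, max_sq_sub_sq_rpow]
    ring
  have hdilation : ∫ s, f (u + s) = c * ∫ t, f (u + c * t) := by
    rw [Measure.integral_comp_mul_left (fun s => f (u + s)), abs_of_pos (inv_pos.2 hc),
      smul_eq_mul, mul_inv_cancel_left₀ hc.ne']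
  calc ∫ s, f s = c * ∫ t, f (u + c * t) := (integral_add_left_eq_self f u).symm.trans hdilation
    _ = c * (c ^ 2) ^ p * kernelAverage (lptKernel p) ψ u c := by
        simp_rw [hf]
        rw [integral_const_mul, kernelAverage, mul_assoc]

theorem etaCheck_eq_densityOf {γ ρ : ℝ} (hγ : γ ≠ 1) (hρ : 0 < ρ) (m : ℝ) :
    etaCheck γ ρ m = densityOf ((γ - 1) / 2)
      (kernelAverage (lptKernel ((3 - γ) / (2 * (γ - 1)))) lptGenerator) ρ m := by
  have hexponent : (γ - 1) / 2 + (γ - 1) * ((3 - γ) / (2 * (γ - 1))) = 1 := by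
    have hγ₁ : γ - 1 ≠ 0 := sub_ne_zero.2 hγ
    field_simp
    ring
  have hscale : ρ ^ ((γ - 1) / 2) * (ρ ^ (γ - 1)) ^ ((3 - γ) / (2 * (γ - 1))) = ρ := by
    rw [← Real.rpow_mul hρ.le, ← Real.rpow_add hρ, hexponent, Real.rpow_one]
  have hintegral := integral_mul_max_sq_sub_sq_rpow lptGenerator
    ((3 - γ) / (2 * (γ - 1))) (m / ρ) (Real.rpow_pos_of_pos hρ ((γ - 1) / 2))
  rw [sq_rpow_half hρ.le, hscale] at hintegral
  exact hintegral

/-- The kernel has exponent `0` here, and `0 ^ 0 = 1` turns its cut-off into the constant `1`. -/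
theorem etaCheck_three (ρ m : ℝ) : etaCheck 3 ρ m = 0 := by
  simp only [etaCheck, sub_self, zero_div, Real.rpow_zero, mul_one]
  exact integral_lptGenerator

theorem exists_isEntropyKernel_etaCheck {γ : ℝ} (hγ : 1 < γ) :
    ∃ w, IsEntropyKernel w ∧ ∀ ρ, 0 < ρ → ∀ m,
      etaCheck γ ρ m = densityOf ((γ - 1) / 2) (kernelAverage w lptGenerator) ρ m := by
  rcases eq_or_ne γ 3 with rfl | hγ₃
  · exact ⟨0, isEntropyKernel_zero, fun ρ _ m => by
      simp [etaCheck_three, densityOf, kernelAverage]⟩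
  · have hpos : 0 < 2 * (γ - 1) := by linarith
    refine ⟨_, isEntropyKernel_lptKernel ?_ ?_, fun ρ hρ => etaCheck_eq_densityOf hγ.ne' hρ⟩
    · rw [lt_div_iff₀ hpos]
      linarith
    · exact div_ne_zero (sub_ne_zero.2 hγ₃.symm) hpos.ne'

theorem hessQF_etaTilde {γ ρ m A B C : ℝ} {F₁ F₂ : ℝ → ℝ → ℝ}
    (hη : HasHessianAt (etaCheck γ) F₁ F₂ A B C ρ m) (ρbar ξ₁ ξ₂ : ℝ) :
    hessQF (etaTilde γ ρbar) ρ m ξ₁ ξ₂ = hessQF (etaCheck γ) ρ m ξ₁ ξ₂ :=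
  ((hη.sub_affine (etaCheckRho γ ρbar 0) ρbar (etaCheckM γ ρbar 0)).hessQF_eq ξ₁ ξ₂).trans
    (hη.hessQF_eq ξ₁ ξ₂).symm

theorem exists_abs_hessQF_etaTilde_le {γ : ℝ} (hγ : 1 < γ) :
    ∃ N : ℝ, 0 ≤ N ∧ ∀ ρbar ρ : ℝ, 0 < ρ → ∀ m ξ₁ ξ₂ : ℝ,
      |hessQF (etaTilde γ ρbar) ρ m ξ₁ ξ₂| ≤ N *
        (((ξ₂ - m / ρ * ξ₁) ^ 2 + ((γ - 1) / 2 * ρ ^ ((γ - 1) / 2) * ξ₁) ^ 2) / ρ) := by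
  obtain ⟨w, hw, hη⟩ := exists_isEntropyKernel_etaCheck hγ
  have hθ : 0 < (γ - 1) / 2 := by linarith
  refine ⟨(1 : ℝ≥0) * (∫ t, (1 + t ^ 2) * |w t|) * (3 + 1 / ((γ - 1) / 2)), by positivity,
    fun ρbar ρ hρ m ξ₁ ξ₂ => ?_⟩
  have hdensity := hasHessianAt_densityOf (hw.hasHessianAt_kernelAverage
    locallyLipschitz_lptGenerator lipschitzWith_deriv_lptGenerator.locallyLipschitz (m / ρ)
    (Real.rpow_pos_of_pos hρ ((γ - 1) / 2)).ne') hρ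
  have heq := (eventually_fst_pos hρ m).mono fun z hz => hη z.1 hz z.2
  rw [hessQF_etaTilde (hdensity.congr_of_eventuallyEq heq), hdensity.hessQF_congr heq]
  exact hw.abs_hessQF_densityOf_kernelAverage_le locallyLipschitz_lptGenerator
    lipschitzWith_deriv_lptGenerator hθ hρ m ξ₁ ξ₂

end LionsPerthameTadmor

section PhysicalEntropy

theorem etaStar_eq_densityOf {γ ρ : ℝ} (hρ : 0 < ρ) (κ m : ℝ) :
    etaStar γ κ ρ m =
      densityOf ((γ - 1) / 2) (fun u c => u ^ 2 / 2 + κ / (γ - 1) * c ^ 2) ρ m := by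
  have hpow : ρ * ρ ^ (γ - 1) = ρ ^ γ := by
    rw [Real.rpow_sub_one hρ.ne', mul_div_cancel₀ _ hρ.ne']
  rw [etaStar, densityOf, sq_rpow_half hρ.le, ← hpow]
  field_simp

theorem hasHessianAt_sq_div_two_add_mul_sq (k u c : ℝ) :
    HasHessianAt (fun u c => u ^ 2 / 2 + k * c ^ 2) (fun u _ => u) (fun _ c => 2 * k * c)
      1 0 (2 * k) u c where
  gradient := Eventually.of_forall fun z =>
    ((HasPartialsAt.of_fst ((hasDerivAt_pow 2 z.1).div_const 2) z.2).add
      (.of_snd z.1 ((hasDerivAt_pow 2 z.2).const_mul k))).congr_partials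
        (by simp) (by push_cast; ring)
  partials_fst := .of_fst (hasDerivAt_id u) c
  partials_snd := (HasPartialsAt.of_snd u ((hasDerivAt_id c).const_mul (2 * k))).congr_partials
    rfl (mul_one _)

theorem hessQF_etaStar {γ ρ : ℝ} (hγ : γ ≠ 1) (hρ : 0 < ρ) (κ m ξ₁ ξ₂ : ℝ) :
    hessQF (etaStar γ κ) ρ m ξ₁ ξ₂ =
      ((ξ₂ - m / ρ * ξ₁) ^ 2 +
        4 * γ * κ / (γ - 1) ^ 2 * ((γ - 1) / 2 * ρ ^ ((γ - 1) / 2) * ξ₁) ^ 2) / ρ := by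
  have hγ₁ : γ - 1 ≠ 0 := sub_ne_zero.2 hγ
  have hhess := hasHessianAt_sq_div_two_add_mul_sq (κ / (γ - 1)) (m / ρ) (ρ ^ ((γ - 1) / 2))
  rw [(hasHessianAt_densityOf hhess hρ).hessQF_congr ((eventually_fst_pos hρ m).mono fun z hz =>
    etaStar_eq_densityOf hz κ z.2), hessQF_densityOf hhess hρ]
  field_simp
  ring

end PhysicalEntropy

theorem hessian_etaTilde_le_hessian_etaStar_general (γ : ℝ) (hγ : 1 < γ) (κ : ℝ) (hκ : 0 < κ) :
    ∃ M : ℝ, 0 < M ∧ ∀ ρbar : ℝ, 0 < ρbar → ∀ ρ : ℝ, 0 < ρ → ∀ m ξ₁ ξ₂ : ℝ,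
      |hessQF (fun x y => etaTilde γ ρbar x y) ρ m ξ₁ ξ₂|
        ≤ M * hessQF (fun x y => etaStar γ κ x y) ρ m ξ₁ ξ₂ := by
  obtain ⟨N, hN, hbound⟩ := exists_abs_hessQF_etaTilde_le hγ
  set δ := 4 * γ * κ / (γ - 1) ^ 2 with hδ
  have hδ₀ : 0 < δ := div_pos (by positivity) (pow_pos (sub_pos.2 hγ) 2)
  refine ⟨(N + 1) * (1 + δ⁻¹), by positivity, fun ρbar _ ρ hρ m ξ₁ ξ₂ => ?_⟩
  rw [hessQF_etaStar hγ.ne' hρ, ← hδ]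
  set a := ξ₂ - m / ρ * ξ₁
  set b := (γ - 1) / 2 * ρ ^ ((γ - 1) / 2) * ξ₁
  have hforms : a ^ 2 + b ^ 2 ≤ (1 + δ⁻¹) * (a ^ 2 + δ * b ^ 2) := by
    have hexpand : (1 + δ⁻¹) * (a ^ 2 + δ * b ^ 2) =
        a ^ 2 + b ^ 2 + (δ⁻¹ * a ^ 2 + δ * b ^ 2) := by
      field_simp
      ring
    rw [hexpand]
    exact le_add_of_nonneg_right (by positivity)
  calc |hessQF (etaTilde γ ρbar) ρ m ξ₁ ξ₂| ≤ N * ((a ^ 2 + b ^ 2) / ρ) :=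
        hbound ρbar ρ hρ m ξ₁ ξ₂
    _ ≤ (N + 1) * (((1 + δ⁻¹) * (a ^ 2 + δ * b ^ 2)) / ρ) := by
        gcongr
        exact le_add_of_nonneg_right zero_le_one
    _ = (N + 1) * (1 + δ⁻¹) * ((a ^ 2 + δ * b ^ 2) / ρ) := by ring

/-- there is `M > 0` depending only on `γ` such that for every `ρ̄ > 0`,
all `ρ > 0`, `m ∈ ℝ` and `ξ ∈ ℝ²`, `|ξ ∇²η̃(ρ,m) ξᵀ| ≤ M ξ ∇²η*(ρ,m) ξᵀ`,
with `κ = (γ−1)²/(4γ)`. -/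
theorem hessian_etaTilde_le_hessian_etaStar (γ : ℝ) (hγ : 1 < γ)
    (κ : ℝ) (hκ : κ = (γ - 1) ^ (2:ℕ) / (4 * γ)) :
    ∃ M : ℝ, 0 < M ∧ ∀ ρbar : ℝ, 0 < ρbar → ∀ ρ : ℝ, 0 < ρ → ∀ m ξ₁ ξ₂ : ℝ,
      |hessQF (fun x y => etaTilde γ ρbar x y) ρ m ξ₁ ξ₂|
        ≤ M * hessQF (fun x y => etaStar γ κ x y) ρ m ξ₁ ξ₂ :=
  hessian_etaTilde_le_hessian_etaStar_general γ hγ κ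
    (hκ ▸ div_pos (pow_pos (sub_pos.2 hγ) 2) (by linarith))
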